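/- For a conical intersection the nondegeneracy of the conicity matrix is necessary: let H(u) = H₀ + u₁H₁ + u₂H₂ + u₃H₃ be Hermitian n×n matrices, and suppose λ_j(ū) = λ_{j+1}(ū) is a double eigenvalue with orthonormal eigenvectors ψ₁, ψ₂ such that the conicity matrix M(ψ₁,ψ₂) is singular. Then the intersection is not conical: for every c > 0 there exist a unit vector v ∈ ℝ³ and arbitrarily small t > 0 with λ_{j+1}(ū + tv) − λ_j(ū + tv) ≤ ct. -/

import Mathlib

open Polynomial
open scoped InnerProductSpace ComplexConjugate


lemma aux_eigenbasis {n : ℕ} (T : EuclideanSpace ℂ (Fin n) →L[ℂ] EuclideanSpace ℂ (Fin n))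
    (hT : IsSelfAdjoint T) (l : Fin n → ℝ) (hl : Monotone l)
    (hc : LinearMap.charpoly (T : EuclideanSpace ℂ (Fin n) →ₗ[ℂ] EuclideanSpace ℂ (Fin n))
      = ∏ k : Fin n, (X - C (l k : ℂ))) :
    ∃ f : OrthonormalBasis (Fin n) ℂ (EuclideanSpace ℂ (Fin n)),
      ∀ i, T (f i) = (l i : ℂ) • f i := by
  have hs := ContinuousLinearMap.isSelfAdjoint_iff_isSymmetric.mp hT
  have hn : Module.finrank ℂ (EuclideanSpace ℂ (Fin n)) = n := by simp
  have h1 := hs.sort_roots_charpoly_eq_eigenvalues hn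
  have h2 : (T : EuclideanSpace ℂ (Fin n) →ₗ[ℂ] EuclideanSpace ℂ (Fin n)).charpoly
      = ∏ k : Fin n, (X - C (((l ∘ Fin.rev) k : ℝ) : ℂ)) := by
    rw [hc]
    exact (Equiv.prod_comp Fin.revPerm (fun k : Fin n => (X - C (l k : ℂ)))).symm
  have h3 : List.ofFn (l ∘ Fin.rev) = List.ofFn (hs.eigenvalues hn) := by
    rw [← h1, h2, Polynomial.roots_prod _ _ (by simp [Finset.prod_ne_zero_iff, Polynomial.X_sub_C_ne_zero])]
    simp only [Polynomial.roots_X_sub_C, Multiset.bind_singleton, Fin.univ_val_map, 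
      Multiset.map_coe, List.map_ofFn, Function.comp_def, Multiset.coe_sort]
    simp only [RCLike.re_eq_complex_re, Complex.ofReal_re]
    symm
    apply List.mergeSort_of_pairwise
    simp_rw [decide_eq_true_eq, ← List.sortedGE_iff_pairwise]
    have : Antitone (fun k => l (Fin.rev k)) := fun a b h => hl (Fin.rev_le_rev.mpr h)
    exact this.sortedGE_ofFn
  have h4 := List.ofFn_injective h3
  refine ⟨(hs.eigenvectorBasis hn).reindex Fin.revPerm, fun i => ?_⟩
  have h5 := hs.apply_eigenvectorBasis hn (Fin.rev i)
  have h6 : hs.eigenvalues hn (Fin.rev i) = l i := by rw [← h4]; simp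
  rw [h6] at h5
  rw [OrthonormalBasis.reindex_apply, Fin.revPerm_symm, Fin.revPerm_apply]
  exact h5

lemma aux_quad {ι E : Type*} [Fintype ι] [NormedAddCommGroup E] [InnerProductSpace ℂ E]
    (f : OrthonormalBasis ι ℂ E) (T : E →L[ℂ] E) (μ : ι → ℝ)
    (hT : ∀ i, T (f i) = (μ i : ℂ) • f i) (x : E) :
    (⟪x, T x⟫_ℂ).re = ∑ i, μ i * ‖⟪f i, x⟫_ℂ‖ ^ 2 := by
  have h : T x = ∑ i, ⟪f i, x⟫_ℂ • (μ i : ℂ) • f i := by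
    conv_lhs => rw [← f.sum_repr' x]
    simp [map_sum, hT]
  rw [h, inner_sum, Complex.re_sum]
  refine Finset.sum_congr rfl fun i _ => ?_
  rw [inner_smul_right, inner_smul_right, ← inner_conj_symm x (f i)]
  have := Complex.mul_conj (⟪f i, x⟫_ℂ)
  rw [Complex.normSq_eq_norm_sq] at this
  rw [mul_left_comm, this, ← Complex.ofReal_mul, Complex.ofReal_re]

lemma aux_common {ι E : Type*} [Fintype ι] [DecidableEq ι] [NormedAddCommGroup E]
    [InnerProductSpace ℂ E] (g f : OrthonormalBasis ι ℂ E) (P : ι → Prop) (k : ι) :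
    ∃ x : E, x ≠ 0 ∧ (∀ i, i ≠ k → P i → ⟪f i, x⟫_ℂ = 0) ∧
      (∀ i, i ≠ k → ¬ P i → ⟪g i, x⟫_ℂ = 0) := by
  classical
  have : FiniteDimensional ℂ E := f.toBasis.finiteDimensional_of_finite
  let φ : E →ₗ[ℂ] ({i : ι // i ≠ k} → ℂ) :=
    LinearMap.pi fun i => if P i then (innerSL ℂ (f i)).toLinearMap else (innerSL ℂ (g i)).toLinearMap
  have hlt : Module.finrank ℂ ({i : ι // i ≠ k} → ℂ) < Module.finrank ℂ E := by
    rw [Module.finrank_eq_card_basis f.toBasis, Module.finrank_fintype_fun_eq_card]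
    exact Fintype.card_subtype_lt (x := k) (by simp)
  have hk := LinearMap.ker_ne_bot_of_finrank_lt (f := φ) hlt
  obtain ⟨x, hx, hx0⟩ := Submodule.exists_mem_ne_zero_of_ne_bot hk
  refine ⟨x, hx0, fun i hi hP => ?_, fun i hi hP => ?_⟩
  · have := congrFun (LinearMap.mem_ker.mp hx) ⟨i, hi⟩
    simpa [φ, hP] using this
  · have := congrFun (LinearMap.mem_ker.mp hx) ⟨i, hi⟩
    simpa [φ, hP] using this

lemma aux_real (d X Y b K t m L : ℝ) (hd : 0 < d) (hX : 0 ≤ X) (hY : 0 ≤ Y) (hK : 0 ≤ K)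
    (ht : 0 < t) (hb : -K ≤ b) (htd : 4 * K * t ≤ d) (hXY : 0 < X ^ 2 + Y ^ 2)
    (h : m * (X ^ 2 + Y ^ 2) ≤ L * X ^ 2 + (L - d) * Y ^ 2
      + t * (b * X ^ 2 + 2 * K * X * Y + K * Y ^ 2)) :
    m ≤ L + t * b + 2 * K ^ 2 / d * t ^ 2 := by
  by_contra! hc
  have h1 : (L + t * b + 2 * K ^ 2 / d * t ^ 2) * (X ^ 2 + Y ^ 2) < m * (X ^ 2 + Y ^ 2) := by
    gcongr
  have h2 : d * (K / d) = K := by field_simp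
  set r := K / d with hr
  have h3 : 2 * K ^ 2 / d = 2 * d * r ^ 2 := by rw [hr]; field_simp
  rw [h3] at h1
  have h4 : 0 ≤ d * (Y - 2 * r * t * X) ^ 2 := by positivity
  have h5 : t * (-K) * Y ^ 2 ≤ t * b * Y ^ 2 := by gcongr
  have h6 : 4 * K * t * Y ^ 2 ≤ d * Y ^ 2 := by gcongr
  have h7 : 0 ≤ 2 * d * r ^ 2 * t ^ 2 * Y ^ 2 := by positivity
  rw [← h2] at h h5 h6
  nlinarith

lemma aux_key {ι E : Type*} [Fintype ι] [DecidableEq ι] [NormedAddCommGroup E]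
    [InnerProductSpace ℂ E] (g f : OrthonormalBasis ι ℂ E) (A B : E →L[ℂ] E) (a μ : ι → ℝ)
    (P : ι → Prop) (p q k : ι) (hpq : p ≠ q) (L d b t K m : ℝ)
    (hA : ∀ i, A (g i) = (a i : ℂ) • g i)
    (hT : ∀ i, (A + (t : ℂ) • B) (f i) = (μ i : ℂ) • f i)
    (hB : ∀ x y, ⟪B x, y⟫_ℂ = ⟪x, B y⟫_ℂ)
    (hμ : ∀ i, i = k ∨ ¬ P i → m ≤ μ i)
    (ha : ∀ i, i = k ∨ P i → i ≠ p → i ≠ q → a i ≤ L - d)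
    (hap : a p = L) (haq : a q = L)
    (h12 : ⟪g p, B (g q)⟫_ℂ = 0) (h11 : ⟪g p, B (g p)⟫_ℂ = b) (h22 : ⟪g q, B (g q)⟫_ℂ = b)
    (hK : ‖B‖ ≤ K) (hd : 0 < d) (ht : 0 < t) (htd : 4 * K * t ≤ d) :
    m ≤ L + t * b + 2 * K ^ 2 / d * t ^ 2 := by
  obtain ⟨x, hx0, hxf, hxg⟩ := aux_common g f P k
  have hK0 : 0 ≤ K := (norm_nonneg _).trans hK
  set y : E := ⟪g p, x⟫_ℂ • g p + ⟪g q, x⟫_ℂ • g q with hy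
  set z : E := x - y with hz
  have gpp : ⟪g p, g p⟫_ℂ = 1 := by simp
  have gqq : ⟪g q, g q⟫_ℂ = 1 := by simp
  have gpq : ⟪g p, g q⟫_ℂ = 0 := g.orthonormal.2 hpq
  have gqp : ⟪g q, g p⟫_ℂ = 0 := g.orthonormal.2 hpq.symm
  have h21 : ⟪g q, B (g p)⟫_ℂ = 0 := by
    rw [← hB, ← inner_conj_symm, h12, map_zero]
  have hny : ‖y‖ ^ 2 = ‖⟪g p, x⟫_ℂ‖ ^ 2 + ‖⟪g q, x⟫_ℂ‖ ^ 2 := by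
    rw [← g.sum_sq_norm_inner_right y, ← Finset.sum_subset (Finset.subset_univ {p, q})]
    · rw [Finset.sum_pair hpq]
      simp [hy, inner_add_right, inner_smul_right, gpq, gqp]
    · intro i _ hi
      simp only [Finset.mem_insert, Finset.mem_singleton, not_or] at hi
      have e1 : ⟪g i, g p⟫_ℂ = 0 := g.orthonormal.2 hi.1
      have e2 : ⟪g i, g q⟫_ℂ = 0 := g.orthonormal.2 hi.2
      simp [hy, inner_add_right, inner_smul_right, e1, e2]
  have hyz : ⟪y, z⟫_ℂ = 0 := by
    have e1 : ⟪g p, z⟫_ℂ = 0 := by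
      simp [hz, hy, inner_sub_right, inner_add_right, inner_smul_right, gpq]
    have e2 : ⟪g q, z⟫_ℂ = 0 := by
      simp [hz, hy, inner_sub_right, inner_add_right, inner_smul_right, gqp]
    rw [hy, inner_add_left, inner_smul_left, inner_smul_left, e1, e2]; simp
  have hxyz : x = y + z := by simp [hz]
  have hnx : ‖x‖ ^ 2 = ‖y‖ ^ 2 + ‖z‖ ^ 2 := by
    have := norm_add_sq_eq_norm_sq_add_norm_sq_of_inner_eq_zero y z hyz
    rw [← hxyz] at this
    simpa [sq] using this
  -- B form
  have hyBy : (⟪y, B y⟫_ℂ).re = b * ‖y‖ ^ 2 := by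
    have : ⟪y, B y⟫_ℂ = b * ((‖⟪g p, x⟫_ℂ‖ ^ 2 + ‖⟪g q, x⟫_ℂ‖ ^ 2 : ℝ) : ℂ) := by
      have c1 := Complex.mul_conj (⟪g p, x⟫_ℂ)
      have c2 := Complex.mul_conj (⟪g q, x⟫_ℂ)
      rw [Complex.normSq_eq_norm_sq] at c1 c2
      rw [Complex.ofReal_add, ← c1, ← c2, hy]
      simp only [map_add, map_smul, inner_add_left, inner_add_right, inner_smul_left,
        inner_smul_right, h11, h12, h21, h22]
      ring
    rw [this, ← Complex.ofReal_mul, Complex.ofReal_re, hny]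
  have hBb : ∀ u w : E, (⟪u, B w⟫_ℂ).re ≤ K * ‖u‖ * ‖w‖ := fun u w => by
    calc (⟪u, B w⟫_ℂ).re ≤ ‖⟪u, B w⟫_ℂ‖ := Complex.re_le_norm _
      _ ≤ ‖u‖ * ‖B w‖ := norm_inner_le_norm _ _
      _ ≤ ‖u‖ * (K * ‖w‖) := by gcongr; exact B.le_of_opNorm_le hK w
      _ = _ := by ring
  have hxBx : (⟪x, B x⟫_ℂ).re ≤ b * ‖y‖ ^ 2 + 2 * K * ‖y‖ * ‖z‖ + K * ‖z‖ ^ 2 := by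
    have e1 := hBb y z
    have e2 := hBb z y
    have e3 := hBb z z
    rw [hxyz, map_add, inner_add_left, inner_add_right, inner_add_right]
    simp only [Complex.add_re, hyBy]
    nlinarith
  have hb : -K ≤ b := by
    have e := norm_inner_le_norm (𝕜 := ℂ) (g p) (B (g p))
    have e' := B.le_of_opNorm_le hK (g p)
    rw [h11] at e
    simp at e e'
    have := neg_abs_le b
    linarith
  have hxAx : (⟪x, A x⟫_ℂ).re ≤ L * ‖y‖ ^ 2 + (L - d) * ‖z‖ ^ 2 := by
    rw [aux_quad g A a hA x]
    have e1 : ∑ i, a i * ‖⟪g i, x⟫_ℂ‖ ^ 2 ≤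
        ∑ i, ((L - d) * ‖⟪g i, x⟫_ℂ‖ ^ 2 + ((if i = p then d * ‖⟪g p, x⟫_ℂ‖ ^ 2 else 0) +
          (if i = q then d * ‖⟪g q, x⟫_ℂ‖ ^ 2 else 0))) := by
      refine Finset.sum_le_sum fun i _ => ?_
      by_cases hip : i = p
      · subst hip; simp [hpq, hap]; linarith
      by_cases hiq : i = q
      · subst hiq; simp [hip, haq]; linarith
      simp only [hip, hiq, if_false, add_zero]
      by_cases hik : i = k ∨ P i
      · have := ha i hik hip hiq
        gcongr
      · push Not at hik
        rw [hxg i hik.1 hik.2]; simp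
    refine e1.trans (le_of_eq ?_)
    rw [Finset.sum_add_distrib, Finset.sum_add_distrib, ← Finset.mul_sum,
      g.sum_sq_norm_inner_right]
    simp only [Finset.sum_ite_eq', Finset.mem_univ, if_true]
    rw [hnx, hny]; ring
  have hxTx : m * ‖x‖ ^ 2 ≤ (⟪x, (A + (t : ℂ) • B) x⟫_ℂ).re := by
    rw [aux_quad f _ μ hT x, ← f.sum_sq_norm_inner_right x, Finset.mul_sum]
    refine Finset.sum_le_sum fun i _ => ?_
    by_cases hik : i = k ∨ ¬ P i
    · have := hμ i hik
      gcongr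
    · push Not at hik
      rw [hxf i hik.1 hik.2]; simp
  have hsplit : (⟪x, (A + (t : ℂ) • B) x⟫_ℂ).re = (⟪x, A x⟫_ℂ).re + t * (⟪x, B x⟫_ℂ).re := by
    simp [inner_add_right, inner_smul_right]
  have hxpos : 0 < ‖y‖ ^ 2 + ‖z‖ ^ 2 := by
    rw [← hnx]; have := norm_pos_iff.mpr hx0; positivity
  refine aux_real d ‖y‖ ‖z‖ b K t m L hd (norm_nonneg _) (norm_nonneg _) hK0 ht hb htd hxpos ?_
  rw [← hnx]
  have := mul_le_mul_of_nonneg_left hxBx ht.le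
  linarith

lemma aux_key_neg {ι E : Type*} [Fintype ι] [DecidableEq ι] [NormedAddCommGroup E]
    [InnerProductSpace ℂ E] (g f : OrthonormalBasis ι ℂ E) (A B : E →L[ℂ] E) (a μ : ι → ℝ)
    (P : ι → Prop) (p q k : ι) (hpq : p ≠ q) (L d b t K m : ℝ)
    (hA : ∀ i, A (g i) = (a i : ℂ) • g i)
    (hT : ∀ i, (A + (t : ℂ) • B) (f i) = (μ i : ℂ) • f i)
    (hB : ∀ x y, ⟪B x, y⟫_ℂ = ⟪x, B y⟫_ℂ)
    (hμ : ∀ i, i = k ∨ ¬ P i → μ i ≤ m)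
    (ha : ∀ i, i = k ∨ P i → i ≠ p → i ≠ q → L + d ≤ a i)
    (hap : a p = L) (haq : a q = L)
    (h12 : ⟪g p, B (g q)⟫_ℂ = 0) (h11 : ⟪g p, B (g p)⟫_ℂ = b) (h22 : ⟪g q, B (g q)⟫_ℂ = b)
    (hK : ‖B‖ ≤ K) (hd : 0 < d) (ht : 0 < t) (htd : 4 * K * t ≤ d) :
    - m ≤ - L + t * (- b) + 2 * K ^ 2 / d * t ^ 2 := by
  refine aux_key g f (-A) (-B) (fun i => - a i) (fun i => - μ i) P p q k
    hpq (-L) d (-b) t K (- m) ?_ ?_ ?_ ?_ ?_ ?_ ?_ ?_ ?_ ?_ ?_ hd ht htd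
  · intro i; simp [hA i]
  · intro i
    have h := congrArg Neg.neg (hT i)
    rw [Complex.ofReal_neg, neg_smul, ← h]
    simp [add_comm]
  · intro x y
    simp [hB x y]
  · intro i h
    exact neg_le_neg (hμ i h)
  · intro i hi hip hiq
    have := ha i hi hip hiq
    linarith
  · simp only [hap]
  · simp only [haq]
  · simp [h12]
  · simp [h11]
  · simp [h22]
  · rwa [norm_neg]

lemma aux_lin {E : Type*} [NormedAddCommGroup E] [InnerProductSpace ℂ E] (r s w : ℂ)
    (T : E →L[ℂ] E) : (r + s * w) • T = r • T + s • w • T := by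
  rw [add_smul, mul_smul]

lemma aux_dir (z : Fin 3 → ℂ) (w : Fin 3 → ℝ) 
    (h : (Matrix.of fun i => ![z i, conj (z i), (w i : ℂ)] : Matrix (Fin 3) (Fin 3) ℂ).det = 0) :
    ∃ v : EuclideanSpace ℝ (Fin 3), ‖v‖ = 1 ∧ ∑ i, (v i : ℂ) * z i = 0 ∧ ∑ i, v i * w i = 0 := by
  let R : Matrix (Fin 3) (Fin 3) ℝ := Matrix.of fun i => ![(z i).re, (z i).im, w i]
  have hR : R.det = 0 := by
    rw [Matrix.det_fin_three] at h ⊢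
    have him := congrArg Complex.im h
    simp at him
    simp [R]
    linarith
  obtain ⟨v, hv0, hv⟩ := Matrix.exists_vecMul_eq_zero_iff.mpr hR
  let v' : EuclideanSpace ℝ (Fin 3) := WithLp.toLp 2 v
  have hv' : v' ≠ 0 := by simpa [v'] using hv0
  have c0 := congrFun hv 0
  have c1 := congrFun hv 1
  have c2 := congrFun hv 2
  simp [Matrix.vecMul, dotProduct, R] at c0 c1 c2
  refine ⟨‖v'‖⁻¹ • v', by simp [norm_smul, hv'], ?_, ?_⟩
  · have : ∑ i, (v i : ℂ) * z i = 0 := by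
      apply Complex.ext <;> simp [c0, c1]
    simp [v', mul_assoc, ← Finset.mul_sum, this]
  · simp [v', mul_assoc, ← Finset.mul_sum, c2]

lemma aux_replace {ι E : Type*} [Fintype ι] [DecidableEq ι] [NormedAddCommGroup E]
    [InnerProductSpace ℂ E] (e : OrthonormalBasis ι ℂ E) (A : E →L[ℂ] E) (a : ι → ℝ)
    (hA : ∀ i, A (e i) = (a i : ℂ) • e i)
    (hs : ∀ x y, ⟪A x, y⟫_ℂ = ⟪x, A y⟫_ℂ) (p q : ι) (hpq : p ≠ q) (haq : a q = a p)
    (hne : ∀ i, i ≠ p → i ≠ q → a i ≠ a p) (ψ₁ ψ₂ : E)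
    (h₁ : ⟪ψ₁, ψ₁⟫_ℂ = 1) (h₂ : ⟪ψ₂, ψ₂⟫_ℂ = 1) (h₁₂ : ⟪ψ₁, ψ₂⟫_ℂ = 0)
    (heig₁ : A ψ₁ = (a p : ℂ) • ψ₁) (heig₂ : A ψ₂ = (a p : ℂ) • ψ₂) :
    ∃ g : OrthonormalBasis ι ℂ E, g p = ψ₁ ∧ g q = ψ₂ ∧ ∀ i, A (g i) = (a i : ℂ) • g i := by
  have : FiniteDimensional ℂ E := e.toBasis.finiteDimensional_of_finite
  have horth : ∀ i, i ≠ p → i ≠ q → ∀ ψ : E, A ψ = (a p : ℂ) • ψ → ⟪e i, ψ⟫_ℂ = 0 := by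
    intro i hip hiq ψ hψ
    have h := hs (e i) ψ
    rw [hA, hψ, inner_smul_left, inner_smul_right, Complex.conj_ofReal] at h
    have h' : ((a i : ℂ) - a p) * ⟪e i, ψ⟫_ℂ = 0 := by linear_combination h
    rcases mul_eq_zero.mp h' with h0 | h0
    · exact absurd (by exact_mod_cast sub_eq_zero.mp h0) (hne i hip hiq)
    · exact h0
  have h₂₁ : ⟪ψ₂, ψ₁⟫_ℂ = 0 := inner_eq_zero_symm.mp h₁₂
  let G : ι → E := fun i => if i = p then ψ₁ else if i = q then ψ₂ else e i
  have hGo : Orthonormal ℂ G := by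
    rw [orthonormal_iff_ite]
    intro i k
    by_cases hip : i = p <;> by_cases hiq : i = q <;> by_cases hkp : k = p <;>
      by_cases hkq : k = q
    all_goals first
      | (exfalso; apply hpq; rw [← hip, hiq]; done)
      | (exfalso; apply hpq; rw [← hkp, hkq]; done)
      | skip
    · subst hip; subst hkp; simpa [G] using h₁
    · subst hip; subst hkq; simp [G, h₁₂, hpq, hpq.symm]
    · have h := inner_eq_zero_symm.mp (horth k hkp hkq ψ₁ heig₁)
      subst hip
      simp [G, hkp, hkq, h, Ne.symm hkp]
    · subst hiq; subst hkp; simp [G, h₂₁, hpq, hpq.symm]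
    · subst hiq; subst hkq; simpa [G, hpq.symm] using h₂
    · have h := inner_eq_zero_symm.mp (horth k hkp hkq ψ₂ heig₂)
      subst hiq
      simp [G, hkp, hkq, h, Ne.symm hkq, hpq.symm]
    · have h := horth i hip hiq ψ₁ heig₁
      subst hkp
      simp [G, hip, hiq, h]
    · have h := horth i hip hiq ψ₂ heig₂
      subst hkq
      simp [G, hip, hiq, h, hpq.symm]
    · simp only [G, hip, hiq, hkp, hkq, if_false]
      exact orthonormal_iff_ite.mp e.orthonormal i k
  obtain ⟨g, hg⟩ := Orthonormal.exists_orthonormalBasis_extension_of_card_eq (𝕜 := ℂ) (E := E)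
    (ι := ι) (Module.finrank_eq_card_basis e.toBasis) (v := G) (s := Set.univ)
    (hGo.comp _ Subtype.val_injective)
  refine ⟨g, by simp [hg, G], by simp [hg, G, hpq.symm], fun i => ?_⟩
  rw [hg i trivial]
  by_cases hip : i = p
  · subst hip; simpa [G] using heig₁
  by_cases hiq : i = q
  · subst hiq; simpa [G, hip, haq] using heig₂
  simpa [G, hip, hiq] using hA i

set_option maxHeartbeats 1000000 in
/-- necessity of the nondegeneracy of the conicity matrix for a conical
intersection: if `λ_j(ū) = λ_{j+1}(ū)` is a double eigenvalue of
`H(u) = H₀ + u₁H₁ + u₂H₂ + u₃H₃`, isolated from the rest of the spectrum, with orthonormal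
eigenvectors `ψ₁, ψ₂` whose conicity matrix is singular, then the intersection is not
conical: for every `c > 0` there are a unit direction `v` and arbitrarily small `t > 0`
with `λ_{j+1}(ū + tv) - λ_j(ū + tv) ≤ ct`. -/
theorem singular_conicity_matrix_not_conical
    {n j : ℕ} (hj : j + 1 < n)
    (H₀ : EuclideanSpace ℂ (Fin n) →L[ℂ] EuclideanSpace ℂ (Fin n))
    (Hc : Fin 3 → (EuclideanSpace ℂ (Fin n) →L[ℂ] EuclideanSpace ℂ (Fin n)))
    (hH₀ : IsSelfAdjoint H₀) (hHc : ∀ i, IsSelfAdjoint (Hc i))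
    (lam : EuclideanSpace ℝ (Fin 3) → Fin n → ℝ)
    (hmono : ∀ u, Monotone (lam u))
    (hchar : ∀ u, LinearMap.charpoly
      ((H₀ + ∑ i, (u i : ℂ) • Hc i : EuclideanSpace ℂ (Fin n) →L[ℂ] EuclideanSpace ℂ (Fin n)) :
        EuclideanSpace ℂ (Fin n) →ₗ[ℂ] EuclideanSpace ℂ (Fin n))
      = ∏ k : Fin n, (X - C (lam u k : ℂ)))
    (ubar : EuclideanSpace ℝ (Fin 3))
    (hdouble : lam ubar ⟨j, by omega⟩ = lam ubar ⟨j + 1, hj⟩)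
    (hsep_below : ∀ k : Fin n, k < (⟨j, by omega⟩ : Fin n) → lam ubar k < lam ubar ⟨j, by omega⟩)
    (hsep_above : ∀ k : Fin n, (⟨j + 1, hj⟩ : Fin n) < k → lam ubar ⟨j + 1, hj⟩ < lam ubar k)
    (ψ₁ ψ₂ : EuclideanSpace ℂ (Fin n))
    (h₁ : ⟪ψ₁, ψ₁⟫_ℂ = 1) (h₂ : ⟪ψ₂, ψ₂⟫_ℂ = 1) (h₁₂ : ⟪ψ₁, ψ₂⟫_ℂ = 0)
    (heig₁ : (H₀ + ∑ i, (ubar i : ℂ) • Hc i) ψ₁ = (lam ubar ⟨j, by omega⟩ : ℂ) • ψ₁)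
    (heig₂ : (H₀ + ∑ i, (ubar i : ℂ) • Hc i) ψ₂ = (lam ubar ⟨j, by omega⟩ : ℂ) • ψ₂)
    (M : Matrix (Fin 3) (Fin 3) ℂ)
    (hM : M = Matrix.of fun i =>
      ![⟪ψ₁, Hc i ψ₂⟫_ℂ, conj ⟪ψ₁, Hc i ψ₂⟫_ℂ, ⟪ψ₂, Hc i ψ₂⟫_ℂ - ⟪ψ₁, Hc i ψ₁⟫_ℂ])
    (hsing : M.det = 0) :
    ∀ c > (0 : ℝ), ∀ ε > (0 : ℝ), ∃ v : EuclideanSpace ℝ (Fin 3), ‖v‖ = 1 ∧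
      ∃ t : ℝ, 0 < t ∧ t < ε ∧
        lam (ubar + t • v) ⟨j + 1, hj⟩ - lam (ubar + t • v) ⟨j, by omega⟩ ≤ c * t := by
  intro c hc ε hε
  have hSum : ∀ w : Fin 3 → ℝ, IsSelfAdjoint (∑ i, (w i : ℂ) • Hc i) := fun w => by
    refine isSelfAdjoint_sum (R := EuclideanSpace ℂ (Fin n) →L[ℂ] EuclideanSpace ℂ (Fin n)) _ fun i _ => ?_
    exact IsSelfAdjoint.smul (by simp [isSelfAdjoint_iff]) (hHc i)
  have hsa : ∀ u : EuclideanSpace ℝ (Fin 3), IsSelfAdjoint (H₀ + ∑ i, (u i : ℂ) • Hc i) :=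
    fun u => IsSelfAdjoint.add (R := EuclideanSpace ℂ (Fin n) →L[ℂ] EuclideanSpace ℂ (Fin n)) hH₀ (hSum u)
  have hsym : ∀ T : EuclideanSpace ℂ (Fin n) →L[ℂ] EuclideanSpace ℂ (Fin n), IsSelfAdjoint T →
      ∀ x y, ⟪T x, y⟫_ℂ = ⟪x, T y⟫_ℂ := fun T hT =>
    ContinuousLinearMap.isSelfAdjoint_iff_isSymmetric.mp hT
  have hreal : ∀ T : EuclideanSpace ℂ (Fin n) →L[ℂ] EuclideanSpace ℂ (Fin n), IsSelfAdjoint T →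
      ∀ x, ((⟪x, T x⟫_ℂ).re : ℂ) = ⟪x, T x⟫_ℂ := fun T hT x => by
    apply Complex.conj_eq_iff_re.mp
    rw [inner_conj_symm, hsym T hT]
  -- direction
  obtain ⟨v, hv1, hvz, hvw⟩ := aux_dir (fun i => ⟪ψ₁, Hc i ψ₂⟫_ℂ)
    (fun i => (⟪ψ₂, Hc i ψ₂⟫_ℂ).re - (⟪ψ₁, Hc i ψ₁⟫_ℂ).re) (by
      rw [← hsing, hM]
      congr 1
      ext i k
      fin_cases k
      · rfl
      · rfl
      · simp only [Matrix.of_apply, Complex.ofReal_sub, hreal _ (hHc i)])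
  refine ⟨v, hv1, ?_⟩
  set p : Fin n := ⟨j, by omega⟩ with hp
  set q : Fin n := ⟨j + 1, hj⟩ with hq
  have hpq : p ≠ q := by simp [hp, hq]
  set A := H₀ + ∑ i, (ubar i : ℂ) • Hc i with hAdef
  set B := ∑ i, (v i : ℂ) • Hc i with hBdef
  have hBsa : IsSelfAdjoint B := hSum v
  have hAsa : IsSelfAdjoint A := hsa ubar
  have hT : ∀ t : ℝ, H₀ + ∑ i, (((ubar + t • v) i : ℝ) : ℂ) • Hc i = A + (t : ℂ) • B := fun t => by
    rw [hAdef, hBdef, Finset.smul_sum, add_assoc, ← Finset.sum_add_distrib]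
    congr 1
    refine Finset.sum_congr rfl fun i _ => ?_
    have h : (((ubar + t • v) i : ℝ) : ℂ) = (ubar i : ℂ) + (t : ℂ) * (v i : ℂ) := by simp
    rw [h]
    exact aux_lin _ _ _ _
  obtain ⟨e, he⟩ := aux_eigenbasis A hAsa (lam ubar) (hmono ubar) (hchar ubar)
  have hcases : ∀ i : Fin n, i ≠ p → i ≠ q → i < p ∨ q < i := fun i hip hiq => by
    simp only [hp, hq, Fin.lt_def, Fin.ext_iff, ne_eq] at *
    omega
  obtain ⟨g, hgp, hgq, hg⟩ := aux_replace e A (lam ubar) he (hsym A hAsa) p q hpq hdouble.symm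
    (fun i hip hiq => by
      rcases hcases i hip hiq with h | h
      · exact (hsep_below i h).ne
      · rw [hdouble]; exact (hsep_above i h).ne') ψ₁ ψ₂ h₁ h₂ h₁₂ heig₁ heig₂
  set L := lam ubar p with hL
  have hBapp : ∀ x y, ⟪x, B y⟫_ℂ = ∑ i, (v i : ℂ) * ⟪x, Hc i y⟫_ℂ := fun x y => by
    rw [hBdef]
    simp [ContinuousLinearMap.sum_apply, inner_sum, inner_smul_right]
  have hB12 : ⟪ψ₁, B ψ₂⟫_ℂ = 0 := by rw [hBapp]; exact hvz
  set b := (⟪ψ₁, B ψ₁⟫_ℂ).re with hb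
  have hB11 : ⟪ψ₁, B ψ₁⟫_ℂ = (b : ℂ) := (hreal B hBsa ψ₁).symm
  have hB22 : ⟪ψ₂, B ψ₂⟫_ℂ = (b : ℂ) := by
    rw [← hB11, ← sub_eq_zero, hBapp, hBapp, ← Finset.sum_sub_distrib]
    have h := congrArg (fun r : ℝ => (r : ℂ)) hvw
    simp only [Complex.ofReal_sum, Complex.ofReal_mul, Complex.ofReal_sub, hreal _ (hHc _),
      Complex.ofReal_zero] at h
    rw [← h]
    exact Finset.sum_congr rfl fun i _ => by ring
  -- spectral gap
  obtain ⟨d, hd, hdgap⟩ : ∃ d : ℝ, 0 < d ∧ ∀ i : Fin n, (i < p → lam ubar i ≤ L - d) ∧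
      (q < i → L + d ≤ lam ubar i) := by
    have hev : ∀ᶠ d in nhdsWithin (0 : ℝ) (Set.Ioi 0), ∀ i : Fin n,
        (i < p → lam ubar i ≤ L - d) ∧ (q < i → L + d ≤ lam ubar i) := by
      rw [Filter.eventually_all]
      intro i
      by_cases h1 : i < p
      · have h2 : ¬ q < i := by
          simp only [hp, hq, Fin.lt_def] at *; omega
        have h3 := hsep_below i h1
        filter_upwards [Ioo_mem_nhdsGT (sub_pos.mpr h3)] with d hd
        exact ⟨fun _ => by linarith [hd.2], fun h => absurd h h2⟩
      by_cases h2 : q < i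
      · have h3 := hsep_above i h2
        rw [← hdouble] at h3
        filter_upwards [Ioo_mem_nhdsGT (sub_pos.mpr h3)] with d hd
        exact ⟨fun h => absurd h h1, fun _ => by linarith [hd.2]⟩
      · exact Filter.Eventually.of_forall fun d => ⟨fun h => absurd h h1, fun h => absurd h h2⟩
    obtain ⟨d, h1, h2⟩ := (hev.and self_mem_nhdsWithin).exists
    exact ⟨d, h2, h1⟩
  set K := ‖B‖ with hK
  have hK0 : 0 ≤ K := norm_nonneg _
  -- choice of t
  obtain ⟨t, ht0, htε, htd, htc⟩ : ∃ t : ℝ, 0 < t ∧ t < ε ∧ 4 * K * t ≤ d ∧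
      2 * (2 * K ^ 2 / d) * t ≤ c := by
    have e1 : ∀ᶠ t in nhdsWithin (0 : ℝ) (Set.Ioi 0), 4 * K * t ≤ d := by
      have : Filter.Tendsto (fun t : ℝ => 4 * K * t) (nhdsWithin 0 (Set.Ioi 0)) (nhds (4 * K * 0)) :=
        Filter.Tendsto.mono_left (by fun_prop : Continuous fun t : ℝ => 4 * K * t).continuousAt
          nhdsWithin_le_nhds
      rw [mul_zero] at this
      exact (this.eventually_lt_const hd).mono fun _ h => h.le
    have e2 : ∀ᶠ t in nhdsWithin (0 : ℝ) (Set.Ioi 0), 2 * (2 * K ^ 2 / d) * t ≤ c := by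
      have : Filter.Tendsto (fun t : ℝ => 2 * (2 * K ^ 2 / d) * t) (nhdsWithin 0 (Set.Ioi 0))
          (nhds (2 * (2 * K ^ 2 / d) * 0)) :=
        Filter.Tendsto.mono_left
          (by fun_prop : Continuous fun t : ℝ => 2 * (2 * K ^ 2 / d) * t).continuousAt
          nhdsWithin_le_nhds
      rw [mul_zero] at this
      exact (this.eventually_lt_const hc).mono fun _ h => h.le
    obtain ⟨t, h1, h2, h3⟩ := (e1.and (e2.and (Ioo_mem_nhdsGT hε))).exists
    exact ⟨t, h3.1, h3.2, h1, h2⟩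
  refine ⟨t, ht0, htε, ?_⟩
  have hTsa := hsa (ubar + t • v)
  have hTch := hchar (ubar + t • v)
  rw [hT t] at hTsa hTch
  obtain ⟨f, hf⟩ := aux_eigenbasis _ hTsa _ (hmono (ubar + t • v)) hTch
  have hmon := hmono (ubar + t • v)
  set μ := lam (ubar + t • v) with hμ
  have hup : μ q ≤ L + t * b + 2 * K ^ 2 / d * t ^ 2 := by
    refine aux_key g f A B (lam ubar) μ (fun i => i < q) p q q hpq L d b t K (μ q) hg hf
      (hsym B hBsa) ?_ ?_ rfl hdouble.symm ?_ ?_ ?_ le_rfl hd ht0 htd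
    · rintro i (h | h)
      · rw [h]
      · exact hmon (not_lt.mp h)
    · intro i hi hip hiq
      rcases hcases i hip hiq with h | h
      · exact (hdgap i).1 h
      · rcases hi with hi | hi
        · exact absurd hi hiq
        · exact absurd hi h.not_gt
    · rw [hgp, hgq]; exact hB12
    · rw [hgp]; exact hB11
    · rw [hgq]; exact hB22
  have hlo : - μ p ≤ - L + t * (- b) + 2 * K ^ 2 / d * t ^ 2 := by
    refine aux_key_neg g f A B (lam ubar) μ (fun i => p < i) p q p hpq L d b t K (μ p) hg hf
      (hsym B hBsa) ?_ ?_ rfl hdouble.symm ?_ ?_ ?_ le_rfl hd ht0 htd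
    · rintro i (h | h)
      · rw [h]
      · exact hmon (not_lt.mp h)
    · intro i hi hip hiq
      rcases hcases i hip hiq with h | h
      · rcases hi with hi | hi
        · exact absurd hi hip
        · exact absurd hi h.not_gt
      · exact (hdgap i).2 h
    · rw [hgp, hgq]; exact hB12
    · rw [hgp]; exact hB11
    · rw [hgq]; exact hB22
  have h3 := mul_le_mul_of_nonneg_right htc ht0.le
  nlinarith
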